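/- arXiv:2411.01293 — 3 statements merged into one kernel-verified Lean document; each statement's English description precedes it below -/
import Mathlib

section
/- Let D be a positive natural number, α, σ : ℝ → ℝ smooth with α(t) > 0 and σ(t) > 0 for all t, λ(t) = log(α(t)²/σ(t)²), f(t) = (d/dt) log α(t), g(t)² = -λ'(t)·σ(t)². Let p : ℝ → ℝ^D → ℝ be smooth and everywhere positive, satisfying the linear-drift Fokker–Planck equation ∂_t p(t,x) = -div_x(f(t)·x·p(t,x)) + (1/2)·g(t)²·Δ_x p(t,x) for all t and x. If y : ℝ → ℝ^D is a differentiable curve satisfying the high-probability ODE y'(s) = f(s)·y(s) - g(s)²·∇_x log p(s, y(s)) for all s, then for all s: (d/ds) log p(s, y(s)) = -D·f(s) + (1/2)·g(s)²·Δ_x log p(s, y(s)) - (1/2)·g(s)²·‖∇_x log p(s, y(s))‖². -/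
open scoped BigOperators RealInnerProductSpace
open MeasureTheory

/-- Divergence of a vector field on `EuclideanSpace ℝ (Fin D)`. -/
noncomputable def divg {D : ℕ} (F : EuclideanSpace ℝ (Fin D) → EuclideanSpace ℝ (Fin D))
    (x : EuclideanSpace ℝ (Fin D)) : ℝ :=
  ∑ i, fderiv ℝ F x (EuclideanSpace.single i 1) i

/-- Laplacian of a scalar field on `EuclideanSpace ℝ (Fin D)`. -/
noncomputable def lap {D : ℕ} (f : EuclideanSpace ℝ (Fin D) → ℝ)
    (x : EuclideanSpace ℝ (Fin D)) : ℝ :=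
  divg (gradient f) x


lemma divg_smul_aux {D : ℕ} (u : EuclideanSpace ℝ (Fin D) → ℝ)
    (F : EuclideanSpace ℝ (Fin D) → EuclideanSpace ℝ (Fin D)) (x : EuclideanSpace ℝ (Fin D))
    (hu : DifferentiableAt ℝ u x) (hF : DifferentiableAt ℝ F x) :
    divg (fun z => u z • F z) x = u x * divg F x + fderiv ℝ u x (F x) := by
  have h : fderiv ℝ (fun z => u z • F z) x = u x • fderiv ℝ F x + (fderiv ℝ u x).smulRight (F x) :=
    (hu.hasFDerivAt.smul hF.hasFDerivAt).fderiv
  have h2 : F x = ∑ i, F x i • EuclideanSpace.single i (1 : ℝ) := by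
    have := (EuclideanSpace.basisFun (Fin D) ℝ).sum_repr (F x)
    simpa using this.symm
  have h3 : fderiv ℝ u x (F x) = ∑ i, F x i * fderiv ℝ u x (EuclideanSpace.single i 1) := by
    conv_lhs => rw [h2]
    simp [map_sum]
  unfold divg
  rw [h, h3, Finset.mul_sum, ← Finset.sum_add_distrib]
  refine Finset.sum_congr rfl fun i _ => ?_
  simp
  ring

lemma divg_lin_aux {D : ℕ} (c : ℝ) (x : EuclideanSpace ℝ (Fin D)) :
    divg (fun z => c • z) x = D * c := by
  have h : fderiv ℝ (fun z : EuclideanSpace ℝ (Fin D) => c • z) x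
      = c • ContinuousLinearMap.id ℝ _ := ((hasFDerivAt_id x).const_smul c).fderiv
  unfold divg
  rw [h]
  simp

lemma contDiff_gradient_aux {D : ℕ} (u : EuclideanSpace ℝ (Fin D) → ℝ)
    (hu : ContDiff ℝ (⊤ : ℕ∞) u) : Differentiable ℝ (gradient u) := by
  have h : Differentiable ℝ (fderiv ℝ u) :=
    ((contDiff_infty.1 hu 2).fderiv_right (m := 1) (by norm_num)).differentiable (by simp)
  exact (InnerProductSpace.toDual ℝ (EuclideanSpace ℝ (Fin D))).symm.toContinuousLinearEquiv.differentiable.comp h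

lemma fderiv_gradient_aux {D : ℕ} (u : EuclideanSpace ℝ (Fin D) → ℝ)
    (x v : EuclideanSpace ℝ (Fin D)) : fderiv ℝ u x v = inner ℝ (gradient u x) v := by
  simp [gradient]

lemma gradient_log_aux {D : ℕ} (u : EuclideanSpace ℝ (Fin D) → ℝ)
    (hu : Differentiable ℝ u) (hpos : ∀ x, 0 < u x) (x : EuclideanSpace ℝ (Fin D)) :
    gradient u x = u x • gradient (fun z => Real.log (u z)) x := by
  have h : fderiv ℝ (fun z => Real.log (u z)) x = (u x)⁻¹ • fderiv ℝ u x :=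
    ((hu x).hasFDerivAt.log (hpos x).ne').fderiv
  unfold gradient
  rw [h, map_smul, smul_smul, mul_inv_cancel₀ (hpos x).ne', one_smul]

/-- Density evolution along the high-probability ODE (eq. mode-ode-logp). -/
theorem hp_ode_log_density_evolution {D : ℕ} (hD : 0 < D)
    (α σ : ℝ → ℝ) (hα : ContDiff ℝ (⊤ : ℕ∞) α) (hσ : ContDiff ℝ (⊤ : ℕ∞) σ)
    (hαpos : ∀ t, 0 < α t) (hσpos : ∀ t, 0 < σ t)
    (lam f gsq : ℝ → ℝ)
    (hlam : ∀ t, lam t = Real.log (α t ^ 2 / σ t ^ 2))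
    (hf : ∀ t, f t = deriv (fun u => Real.log (α u)) t)
    (hgsq : ∀ t, gsq t = -(deriv lam t) * σ t ^ 2)
    (p : ℝ → EuclideanSpace ℝ (Fin D) → ℝ)
    (hp : ContDiff ℝ (⊤ : ℕ∞) (fun q : ℝ × EuclideanSpace ℝ (Fin D) => p q.1 q.2))
    (hppos : ∀ t x, 0 < p t x)
    (hFP : ∀ t x, deriv (fun τ => p τ x) t
      = - divg (fun y => p t y • (f t • y)) x + (1 / 2) * gsq t * lap (p t) x)
    (y : ℝ → EuclideanSpace ℝ (Fin D))
    (hy : ∀ s, HasDerivAt y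
      (f s • y s - gsq s • gradient (fun z => Real.log (p s z)) (y s)) s) :
    ∀ s, deriv (fun u => Real.log (p u (y u))) s
      = -(D : ℝ) * f s + (1 / 2) * gsq s * lap (fun z => Real.log (p s z)) (y s)
        - (1 / 2) * gsq s * ‖gradient (fun z => Real.log (p s z)) (y s)‖ ^ 2 := by
  intro s
  have hps : ContDiff ℝ (⊤ : ℕ∞) (p s) := hp.comp (contDiff_prodMk_right s)
  have hpd : Differentiable ℝ (p s) := hps.differentiable (by simp)
  have hls : ContDiff ℝ (⊤ : ℕ∞) (fun z => Real.log (p s z)) :=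
    hps.log fun z => (hppos s z).ne'
  have hgr := gradient_log_aux (p s) hpd (hppos s)
  set G := gradient (fun z => Real.log (p s z)) with hG
  have hGd : Differentiable ℝ G := contDiff_gradient_aux _ hls
  have hne := (hppos s (y s)).ne'
  have hlap : lap (p s) (y s)
      = p s (y s) * (lap (fun z => Real.log (p s z)) (y s) + ‖G (y s)‖ ^ 2) := by
    have e : gradient (p s) = fun z => p s z • G z := funext hgr
    unfold lap
    rw [e, divg_smul_aux _ _ _ (hpd _) (hGd _), fderiv_gradient_aux, hgr, inner_smul_left,
      real_inner_self_eq_norm_sq]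
    simp [hG]
    ring
  have hdiv : divg (fun z => p s z • (f s • z)) (y s)
      = p s (y s) * (D * f s + f s * inner ℝ (G (y s)) (y s)) := by
    rw [divg_smul_aux _ _ _ (hpd _) (by fun_prop), divg_lin_aux, fderiv_gradient_aux, hgr,
      inner_smul_left, inner_smul_right]
    simp
    ring
  have hP : HasFDerivAt (fun q : ℝ × EuclideanSpace ℝ (Fin D) => p q.1 q.2)
      (fderiv ℝ (fun q : ℝ × EuclideanSpace ℝ (Fin D) => p q.1 q.2) (s, y s)) (s, y s) :=
    (hp.differentiable (by simp) _).hasFDerivAt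
  set L := fderiv ℝ (fun q : ℝ × EuclideanSpace ℝ (Fin D) => p q.1 q.2) (s, y s)
  set w := f s • y s - gsq s • G (y s) with hw
  have h1 : HasDerivAt (fun u => p u (y u)) (L (1, w)) s :=
    HasFDerivAt.comp_hasDerivAt (f := fun u => (u, y u)) s hP ((hasDerivAt_id s).prodMk (hy s))
  have h2 : HasDerivAt (fun u => p u (y s)) (L (1, 0)) s :=
    HasFDerivAt.comp_hasDerivAt (f := fun u => (u, y s)) s hP
      ((hasDerivAt_id s).prodMk (hasDerivAt_const s (y s)))
  have h3 : fderiv ℝ (p s) (y s) w = L (0, w) := by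
    have : HasFDerivAt (p s) (L.comp (ContinuousLinearMap.inr ℝ ℝ _)) (y s) :=
      HasFDerivAt.comp (f := fun z => (s, z)) (y s) hP (hasFDerivAt_prodMk_right s (y s))
    rw [this.fderiv]
    simp
  have h4 : L (1, w) = L (1, 0) + L (0, w) := by
    rw [← map_add]; simp
  rw [(h1.log hne).deriv, h4, ← h3, ← h2.deriv, hFP, hdiv, hlap, fderiv_gradient_aux, hgr,
    inner_smul_left, hw, inner_sub_right, inner_smul_right, inner_smul_right,
    real_inner_self_eq_norm_sq]
  simp only [conj_trivial]
  field_simp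
  ring
end

section
/- Let D be a positive natural number, p : ℝ → ℝ^D → ℝ a smooth everywhere-positive function, F : ℝ → ℝ^D → ℝ^D a smooth time-dependent vector field, and g : ℝ → ℝ. If p satisfies the Fokker–Planck equation ∂_t p(t,x) = -div_x(F(t,x)·p(t,x)) + (1/2)·g(t)²·Δ_x p(t,x) for all t ∈ ℝ and x ∈ ℝ^D, then for all t and x: ∂_t log p(t,x) + ⟨∇_x log p(t,x), F(t,x) - g(t)²·∇_x log p(t,x)⟩ - (1/2)·g(t)²·Δ_x log p(t,x) = -div_x F(t,x) - (1/2)·g(t)²·‖∇_x log p(t,x)‖². In particular all second-order derivatives of log p cancel: the right-hand side involves only div_x F and the first-order score ∇_x log p. -/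
open scoped BigOperators RealInnerProductSpace
open MeasureTheory

theorem divg_smul_aux_s6 {D : ℕ} (f : EuclideanSpace ℝ (Fin D) → ℝ)
    (V : EuclideanSpace ℝ (Fin D) → EuclideanSpace ℝ (Fin D)) (x : EuclideanSpace ℝ (Fin D))
    (hf : DifferentiableAt ℝ f x) (hV : DifferentiableAt ℝ V x) :
    divg (fun y => f y • V y) x = f x * divg V x + ⟪gradient f x, V x⟫ := by
  have h1 : ∀ i, fderiv ℝ f x (EuclideanSpace.single i 1) = gradient f x i := by
    intro i
    have h2 := InnerProductSpace.toDual_symm_apply (𝕜 := ℝ)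
      (x := EuclideanSpace.single i (1 : ℝ)) (y := fderiv ℝ f x)
    rw [← h2]
    rw [EuclideanSpace.inner_single_right]
    simp only [gradient, one_mul]
    rfl
  unfold divg
  rw [fderiv_fun_smul hf hV, Finset.mul_sum, PiLp.inner_apply, ← Finset.sum_add_distrib]
  refine Finset.sum_congr rfl fun i _ => ?_
  simp [h1]
  ring

/-- Itô drift of `log p(t, x_t)` along the reverse diffusion
(analytic core of the augmented reverse SDE, Theorem 1): only the first-order score appears. -/
theorem ito_drift_reverse {D : ℕ} (hD : 0 < D)
    (p : ℝ → EuclideanSpace ℝ (Fin D) → ℝ)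
    (F : ℝ → EuclideanSpace ℝ (Fin D) → EuclideanSpace ℝ (Fin D))
    (g : ℝ → ℝ)
    (hp : ContDiff ℝ (⊤ : ℕ∞) (fun q : ℝ × EuclideanSpace ℝ (Fin D) => p q.1 q.2))
    (hppos : ∀ t x, 0 < p t x)
    (hF : ContDiff ℝ (⊤ : ℕ∞) (fun q : ℝ × EuclideanSpace ℝ (Fin D) => F q.1 q.2))
    (hFP : ∀ t x, deriv (fun τ => p τ x) t
      = - divg (fun y => p t y • F t y) x + (1 / 2) * g t ^ 2 * lap (p t) x) :
    ∀ t x, deriv (fun τ => Real.log (p τ x)) t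
        + ⟪gradient (fun y => Real.log (p t y)) x,
            F t x - g t ^ 2 • gradient (fun y => Real.log (p t y)) x⟫
        - (1 / 2) * g t ^ 2 * lap (fun y => Real.log (p t y)) x
      = - divg (F t) x
        - (1 / 2) * g t ^ 2 * ‖gradient (fun y => Real.log (p t y)) x‖ ^ 2 := by
  intro t x
  have hpt : ContDiff ℝ (⊤ : ℕ∞) (p t) :=
    hp.comp (contDiff_const.prodMk contDiff_id : ContDiff ℝ (⊤ : ℕ∞) fun y => (t, y))
  have hFt : ContDiff ℝ (⊤ : ℕ∞) (F t) :=
    hF.comp (contDiff_const.prodMk contDiff_id : ContDiff ℝ (⊤ : ℕ∞) fun y => (t, y))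
  have hpx : ContDiff ℝ (⊤ : ℕ∞) (fun τ => p τ x) :=
    hp.comp (contDiff_id.prodMk contDiff_const : ContDiff ℝ (⊤ : ℕ∞) fun τ : ℝ => (τ, x))
  have hlog : ContDiff ℝ (⊤ : ℕ∞) (fun y => Real.log (p t y)) :=
    hpt.log fun y => (hppos t y).ne'
  have hpd : Differentiable ℝ (p t) := hpt.differentiable (by simp)
  have hFd : Differentiable ℝ (F t) := hFt.differentiable (by simp)
  have hpxd : Differentiable ℝ (fun τ => p τ x) := hpx.differentiable (by simp)
  have hsd : Differentiable ℝ (gradient (fun y => Real.log (p t y))) := by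
    have h2 : Differentiable ℝ (fderiv ℝ (fun y => Real.log (p t y))) :=
      (hlog.fderiv_right (m := 1) (by norm_cast)).differentiable (by simp)
    exact (InnerProductSpace.toDual ℝ
      (EuclideanSpace ℝ (Fin D))).symm.toContinuousLinearEquiv.differentiable.comp h2
  have hgrad : gradient (p t) = fun y => p t y • gradient (fun y => Real.log (p t y)) y := by
    funext y
    unfold gradient
    rw [fderiv.log (hpd y) (hppos t y).ne', map_smul, smul_smul,
      mul_inv_cancel₀ (hppos t y).ne', one_smul]
  have hlap : lap (p t) x = p t x * lap (fun y => Real.log (p t y)) x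
      + p t x * ‖gradient (fun y => Real.log (p t y)) x‖ ^ 2 := by
    unfold lap
    conv_lhs => rw [hgrad]
    rw [divg_smul_aux_s6 _ _ x (hpd x) (hsd x), hgrad, real_inner_smul_left,
      real_inner_self_eq_norm_sq]
  have hdt : deriv (fun τ => Real.log (p τ x)) t = deriv (fun τ => p τ x) t / p t x :=
    deriv.log (hpxd t) (hppos t x).ne'
  rw [hdt, hFP, divg_smul_aux_s6 _ _ x (hpd x) (hFd x), hlap, inner_sub_right,
    real_inner_smul_right, real_inner_self_eq_norm_sq, congrFun hgrad x, real_inner_smul_left]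
  have := (hppos t x).ne'
  field_simp
  ring
end

section
/- (Closed-form solution of the high-probability ODE in the Gaussian case, Remark 5.) Let D be a positive natural number, α, σ : ℝ → ℝ smooth with α(u) > 0 and σ(u) > 0 for all u and α(0) = 1, λ(u) = log(α(u)²/σ(u)²), f(u) = (d/du) log α(u), g(u)² = -λ'(u)·σ(u)². Let p : ℝ → ℝ^D → ℝ be smooth and everywhere positive, satisfying the linear-drift Fokker–Planck equation ∂_t p(t,x) = -div_x(f(t)·x·p(t,x)) + (1/2)·g(t)²·Δ_x p(t,x) for all t and x, and assume additionally that ∇_x(Δ_x log p)(s, x) = 0 for all s and x. Fix t > 0 and let y : [0, t] → ℝ^D be a differentiable curve satisfying the high-probability ODE y'(s) = f(s)·y(s) - g(s)²·∇_x log p(s, y(s)) for all s ∈ [0, t]. Then y(0) = (y(t) + σ(t)²·∇_x log p(t, y(t)))/α(t) - e^{-λ(0)}·α(t)·∇_x log p(t, y(t)); equivalently, y(0) = y(t)/α(t) + (e^{-λ(t)} - e^{-λ(0)})·α(t)·∇_x log p(t, y(t)). -/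
open scoped BigOperators RealInnerProductSpace
open MeasureTheory

theorem aux_divg_smul {D : ℕ} (a : EuclideanSpace ℝ (Fin D) → ℝ)
    (F : EuclideanSpace ℝ (Fin D) → EuclideanSpace ℝ (Fin D)) (x : EuclideanSpace ℝ (Fin D))
    (ha : DifferentiableAt ℝ a x) (hF : DifferentiableAt ℝ F x) :
    divg (fun z => a z • F z) x = a x * divg F x + fderiv ℝ a x (F x) := by
  have h := (ha.hasFDerivAt.smul hF.hasFDerivAt).fderiv
  unfold divg
  have h2 : fderiv ℝ a x (F x) = ∑ i, fderiv ℝ a x (EuclideanSpace.single i 1) * F x i := by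
    have : F x = ∑ i, F x i • EuclideanSpace.single i (1 : ℝ) := by
      ext j
      simp [Pi.single_apply]
    conv_lhs => rw [this]
    rw [map_sum]
    refine Finset.sum_congr rfl fun i _ => ?_
    rw [map_smul, smul_eq_mul, mul_comm]
  rw [h2, Finset.mul_sum, ← Finset.sum_add_distrib]
  refine Finset.sum_congr rfl fun i _ => ?_
  have h' : fderiv ℝ (fun z => a z • F z) x = _ := h
  rw [h']
  simp

theorem aux_divg_lin {D : ℕ} (c : ℝ) (x : EuclideanSpace ℝ (Fin D)) :
    divg (fun z => c • z) x = c * D := by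
  have h : fderiv ℝ (fun z : EuclideanSpace ℝ (Fin D) => c • z) x
      = c • ContinuousLinearMap.id ℝ _ := ((hasFDerivAt_id x).const_smul c).fderiv
  unfold divg
  rw [h]
  simp [mul_comm]

theorem aux_grad_inner {D : ℕ} (u : EuclideanSpace ℝ (Fin D) → ℝ)
    (x v : EuclideanSpace ℝ (Fin D)) : ⟪gradient u x, v⟫ = fderiv ℝ u x v := by
  unfold gradient
  simp

theorem aux_grad_smooth {D : ℕ} (u : EuclideanSpace ℝ (Fin D) → ℝ)
    (hu : ContDiff ℝ (⊤ : ℕ∞) u) : ContDiff ℝ (⊤ : ℕ∞) (gradient u) := by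
  have h : ContDiff ℝ (⊤ : ℕ∞) (fderiv ℝ u) := hu.fderiv_right (by simp)
  exact (InnerProductSpace.toDual ℝ (EuclideanSpace ℝ (Fin D))).symm.contDiff.comp h

theorem aux_lap_smooth {D : ℕ} (u : EuclideanSpace ℝ (Fin D) → ℝ)
    (hu : ContDiff ℝ (⊤ : ℕ∞) u) : ContDiff ℝ (⊤ : ℕ∞) (lap u) := by
  have h : ContDiff ℝ (⊤ : ℕ∞) (fderiv ℝ (gradient u)) :=
    (aux_grad_smooth u hu).fderiv_right (by simp)
  unfold lap divg
  refine ContDiff.sum fun i _ => ?_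
  have h1 : ContDiff ℝ (⊤ : ℕ∞)
      (fun x => fderiv ℝ (gradient u) x (EuclideanSpace.single i 1)) :=
    h.clm_apply contDiff_const
  exact (EuclideanSpace.proj (𝕜 := ℝ) i).contDiff.comp h1

theorem aux_log_fderiv {D : ℕ} (P : EuclideanSpace ℝ (Fin D) → ℝ)
    (hP : ContDiff ℝ (⊤ : ℕ∞) P) (hpos : ∀ x, 0 < P x) (x : EuclideanSpace ℝ (Fin D)) :
    fderiv ℝ P x = P x • fderiv ℝ (fun z => Real.log (P z)) x := by
  have hd : DifferentiableAt ℝ P x := hP.differentiable (by simp) x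
  rw [fderiv.log hd (hpos x).ne', smul_smul, mul_inv_cancel₀ (hpos x).ne', one_smul]

/-- The logarithmic form of the spatial operator. -/
theorem aux_slice {D : ℕ} (P : EuclideanSpace ℝ (Fin D) → ℝ)
    (hP : ContDiff ℝ (⊤ : ℕ∞) P) (hpos : ∀ x, 0 < P x) (c g : ℝ)
    (x : EuclideanSpace ℝ (Fin D)) :
    (- divg (fun y => P y • (c • y)) x + (1 / 2) * g * lap P x)
      = P x * (- (c * D) - c * ⟪gradient (fun z => Real.log (P z)) x, x⟫
        + (1 / 2) * g * (lap (fun z => Real.log (P z)) x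
          + ⟪gradient (fun z => Real.log (P z)) x, gradient (fun z => Real.log (P z)) x⟫)) := by
  have hL : ContDiff ℝ (⊤ : ℕ∞) (fun z => Real.log (P z)) := hP.log (fun z => (hpos z).ne')
  have hd : DifferentiableAt ℝ P x := hP.differentiable (by simp) x
  have hG : DifferentiableAt ℝ (gradient (fun z => Real.log (P z))) x :=
    (aux_grad_smooth _ hL).differentiable (by simp) x
  have e : gradient P = fun z => P z • gradient (fun z => Real.log (P z)) z := by
    funext z
    unfold gradient
    rw [aux_log_fderiv P hP hpos z, map_smul]
  have e2 : lap P x = divg (fun z => P z • gradient (fun z => Real.log (P z)) z) x := by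
    unfold lap
    rw [e]
  rw [e2, aux_divg_smul _ _ _ hd hG, aux_divg_smul _ _ _ hd (by fun_prop), aux_divg_lin,
    aux_log_fderiv P hP hpos x, aux_grad_inner, aux_grad_inner]
  unfold lap
  simp only [smul_apply, map_smul, smul_eq_mul]
  ring

/-- Evolution of the score along the flow. -/
theorem aux_score {D : ℕ} (f gsq : ℝ → ℝ)
    (p : ℝ → EuclideanSpace ℝ (Fin D) → ℝ)
    (hp : ContDiff ℝ (⊤ : ℕ∞) (fun q : ℝ × EuclideanSpace ℝ (Fin D) => p q.1 q.2))
    (hppos : ∀ t x, 0 < p t x)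
    (hFP : ∀ t x, deriv (fun τ => p τ x) t
      = - divg (fun y => p t y • (f t • y)) x + (1 / 2) * gsq t * lap (p t) x)
    (hgauss : ∀ s x, gradient (fun z => lap (fun w => Real.log (p s w)) z) x = 0)
    (y : ℝ → EuclideanSpace ℝ (Fin D)) (s : ℝ)
    (hy : HasDerivAt y
      (f s • y s - gsq s • gradient (fun z => Real.log (p s z)) (y s)) s) :
    HasDerivAt (fun r => gradient (fun z => Real.log (p r z)) (y r))
      (-(f s) • gradient (fun z => Real.log (p s z)) (y s)) s := by
  set u : ℝ × (EuclideanSpace ℝ (Fin D)) → ℝ := fun q => Real.log (p q.1 q.2) with hu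
  have hus : ContDiff ℝ (⊤ : ℕ∞) u := hp.log (fun z => (hppos _ _).ne')
  have hslice : ∀ r, ContDiff ℝ (⊤ : ℕ∞) (p r) := fun r =>
    hp.comp (contDiff_const.prodMk contDiff_id : ContDiff ℝ (⊤ : ℕ∞) (fun x : (EuclideanSpace ℝ (Fin D)) => (r, x)))
  have hLs : ∀ r, ContDiff ℝ (⊤ : ℕ∞) (fun z => Real.log (p r z)) := fun r =>
    (hslice r).log (fun z => (hppos _ _).ne')
  have hDu : ContDiff ℝ (⊤ : ℕ∞) (fderiv ℝ u) := hus.fderiv_right (by simp)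
  have hud : Differentiable ℝ u := hus.differentiable (by simp)
  have hDud : Differentiable ℝ (fderiv ℝ u) := hDu.differentiable (by simp)
  -- partial derivatives
  have hx : ∀ r (x v : (EuclideanSpace ℝ (Fin D))), fderiv ℝ (fun z => Real.log (p r z)) x v = fderiv ℝ u (r, x) (0, v) := by
    intro r x v
    have h := (hud (r, x)).hasFDerivAt.comp x (hasFDerivAt_prodMk_right r x)
    have h' : fderiv ℝ (fun z => Real.log (p r z)) x = _ := h.fderiv
    rw [h']
    simp
  have ht : ∀ r (x : (EuclideanSpace ℝ (Fin D))), fderiv ℝ u (r, x) (1, 0) = deriv (fun τ => p τ x) r / p r x := by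
    intro r x
    have h := (hud (r, x)).hasFDerivAt.comp_hasDerivAt r
      ((hasDerivAt_id r).prodMk (hasDerivAt_const r x))
    have h1 : deriv (fun τ => Real.log (p τ x)) r = _ := h.deriv
    have hpd : DifferentiableAt ℝ (fun τ => p τ x) r :=
      (hp.differentiable (by simp)).comp
        (differentiable_id.prodMk (differentiable_const x) :
          Differentiable ℝ (fun τ : ℝ => (τ, x))) r
    rw [← h1, deriv.log hpd (hppos r x).ne']
  set G : (EuclideanSpace ℝ (Fin D)) → (EuclideanSpace ℝ (Fin D)) := gradient (fun z => Real.log (p s z)) with hG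
  have hGs : Differentiable ℝ G := (aux_grad_smooth _ (hLs s)).differentiable (by simp)
  have ht2 : ∀ x : (EuclideanSpace ℝ (Fin D)), fderiv ℝ u (s, x) (1, 0) = - (f s * D) - f s * ⟪G x, x⟫
        + (1 / 2) * gsq s * (lap (fun z => Real.log (p s z)) x + ⟪G x, G x⟫) := by
    intro x
    rw [ht, hFP, aux_slice (p s) (hslice s) (hppos s), mul_div_cancel_left₀ _ (hppos s x).ne']
  set w : (EuclideanSpace ℝ (Fin D)) := f s • y s - gsq s • G (y s) with hw
  -- the second derivative identity
  have key : ∀ v : (EuclideanSpace ℝ (Fin D)), fderiv ℝ (fderiv ℝ u) (s, y s) (1, w) (0, v) = -(f s) * ⟪G (y s), v⟫ := by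
    intro v
    have hsymm : IsSymmSndFDerivAt ℝ u (s, y s) :=
      hus.contDiffAt.isSymmSndFDerivAt (by
        rw [minSmoothness_of_isRCLikeNormedField]
        exact WithTop.coe_le_coe.2 (le_top : (2 : ℕ∞) ≤ ⊤))
    rw [hsymm.eq]
    have hc : HasFDerivAt (fun x : (EuclideanSpace ℝ (Fin D)) => fderiv ℝ u (s, x))
        ((fderiv ℝ (fderiv ℝ u) (s, y s)).comp (ContinuousLinearMap.inr ℝ ℝ (EuclideanSpace ℝ (Fin D)))) (y s) :=
      (hDud (s, y s)).hasFDerivAt.comp (y s) (hasFDerivAt_prodMk_right s (y s))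
    have h1 := hc.clm_apply (hasFDerivAt_const ((1, w) : ℝ × (EuclideanSpace ℝ (Fin D))) (y s))
    have hfun : (fun x : (EuclideanSpace ℝ (Fin D)) => fderiv ℝ u (s, x) (1, w)) = fun x : (EuclideanSpace ℝ (Fin D)) =>
        (- (f s * D) - f s * ⟪G x, x⟫
        + (1 / 2) * gsq s * (lap (fun z => Real.log (p s z)) x + ⟪G x, G x⟫)) + ⟪G x, w⟫ := by
      funext x
      rw [← ht2, hG, aux_grad_inner, hx, ← map_add]
      simp
    have hlap : HasFDerivAt (lap (fun z => Real.log (p s z))) (0 : (EuclideanSpace ℝ (Fin D)) →L[ℝ] ℝ) (y s) := by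
      have h0 : fderiv ℝ (lap (fun z => Real.log (p s z))) (y s) = 0 := by
        have := hgauss s (y s)
        unfold gradient at this
        simpa using this
      rw [← h0]
      exact ((aux_lap_smooth _ (hLs s)).differentiable (by simp) (y s)).hasFDerivAt
    have hGd := (hGs (y s)).hasFDerivAt
    have h2 := ((((hGd.inner ℝ (hasFDerivAt_id (y s))).const_mul (f s)).const_sub
      (-(f s * D))).add ((hlap.add (hGd.inner ℝ hGd)).const_mul ((1 / 2) * gsq s))).add
        (hGd.inner ℝ (hasFDerivAt_const w (y s)))
    have h3 := h2.congr_of_eventuallyEq (Filter.EventuallyEq.of_eq hfun)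
    have h4 := congrArg (fun A : (EuclideanSpace ℝ (Fin D)) →L[ℝ] ℝ => A v) (h1.unique h3)
    simp only [id] at h4
    simp at h4
    rw [h4, hw]
    simp only [inner_sub_right, inner_smul_right]
    rw [real_inner_comm (G (y s)) (fderiv ℝ G (y s) v)]
    ring
  -- derivative of the full differential along the curve
  have hcurve : HasDerivAt (fun r => fderiv ℝ u (r, y r))
      (fderiv ℝ (fderiv ℝ u) (s, y s) (1, w)) s :=
    (hDud (s, y s)).hasFDerivAt.comp_hasDerivAt s ((hasDerivAt_id s).prodMk hy)
  let T : ((ℝ × EuclideanSpace ℝ (Fin D)) →L[ℝ] ℝ) →L[ℝ] EuclideanSpace ℝ (Fin D) :=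
    LinearMap.toContinuousLinearMap
      { toFun := fun A => (InnerProductSpace.toDual ℝ (EuclideanSpace ℝ (Fin D))).symm
          (A.comp (ContinuousLinearMap.inr ℝ ℝ (EuclideanSpace ℝ (Fin D))))
        map_add' := fun A B => by rw [ContinuousLinearMap.add_comp, map_add]
        map_smul' := fun c A => by simp }
  have hTi : ∀ (A : (ℝ × (EuclideanSpace ℝ (Fin D))) →L[ℝ] ℝ) (v : (EuclideanSpace ℝ (Fin D))), ⟪T A, v⟫ = A (0, v) := by
    intro A v
    simp [T]
  have hfin := T.hasFDerivAt.comp_hasDerivAt s hcurve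
  have e1 : (fun r => gradient (fun z => Real.log (p r z)) (y r))
      = (T ∘ fun r => fderiv ℝ u (r, y r)) := by
    funext r
    refine ext_inner_right ℝ fun v => ?_
    rw [aux_grad_inner, hx, Function.comp_apply, hTi]
  have e2 : -(f s) • G (y s) = T (fderiv ℝ (fderiv ℝ u) (s, y s) (1, w)) := by
    refine ext_inner_right ℝ fun v => ?_
    rw [hTi, key, real_inner_smul_left]
  rw [e1, e2]
  exact hfin

theorem aux_const {D : ℕ} (F : ℝ → EuclideanSpace ℝ (Fin D)) (t : ℝ)
    (h : ∀ s ∈ Set.Icc (0 : ℝ) t, HasDerivAt F 0 s) (s : ℝ) (hs : s ∈ Set.Icc (0 : ℝ) t) :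
    F s = F 0 :=
  constant_of_has_deriv_right_zero (fun x hx => (h x hx).continuousAt.continuousWithinAt)
    (fun x hx => (h x ⟨hx.1, hx.2.le⟩).hasDerivWithinAt) s hs

/-- Closed-form solution of the high-probability ODE in the Gaussian
case (Remark 5). -/
theorem hp_ode_gaussian_closed_form {D : ℕ} (hD : 0 < D)
    (α σ : ℝ → ℝ) (hα : ContDiff ℝ (⊤ : ℕ∞) α) (hσ : ContDiff ℝ (⊤ : ℕ∞) σ)
    (hαpos : ∀ u, 0 < α u) (hσpos : ∀ u, 0 < σ u) (hα0 : α 0 = 1)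
    (lam f gsq : ℝ → ℝ)
    (hlam : ∀ u, lam u = Real.log (α u ^ 2 / σ u ^ 2))
    (hf : ∀ u, f u = deriv (fun v => Real.log (α v)) u)
    (hgsq : ∀ u, gsq u = -(deriv lam u) * σ u ^ 2)
    (p : ℝ → EuclideanSpace ℝ (Fin D) → ℝ)
    (hp : ContDiff ℝ (⊤ : ℕ∞) (fun q : ℝ × EuclideanSpace ℝ (Fin D) => p q.1 q.2))
    (hppos : ∀ t x, 0 < p t x)
    (hFP : ∀ t x, deriv (fun τ => p τ x) t
      = - divg (fun y => p t y • (f t • y)) x + (1 / 2) * gsq t * lap (p t) x)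
    (hgauss : ∀ s x, gradient (fun z => lap (fun w => Real.log (p s w)) z) x = 0)
    (t : ℝ) (ht : 0 < t)
    (y : ℝ → EuclideanSpace ℝ (Fin D))
    (hy : ∀ s ∈ Set.Icc (0 : ℝ) t, HasDerivAt y
      (f s • y s - gsq s • gradient (fun z => Real.log (p s z)) (y s)) s) :
    y 0 = (α t)⁻¹ • (y t + σ t ^ 2 • gradient (fun z => Real.log (p t z)) (y t))
        - (Real.exp (-(lam 0)) * α t) • gradient (fun z => Real.log (p t z)) (y t)
    ∧ y 0 = (α t)⁻¹ • y t
        + ((Real.exp (-(lam t)) - Real.exp (-(lam 0))) * α t) •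
            gradient (fun z => Real.log (p t z)) (y t) := by
  have hαd : ∀ s, HasDerivAt α (f s * α s) s := by
    intro s
    have h := (hα.differentiable (by simp) s)
    rw [hf, deriv.log h (hαpos s).ne', div_mul_cancel₀ _ (hαpos s).ne']
    exact h.hasDerivAt
  have hlamd : ∀ s, HasDerivAt lam (deriv lam s) s := by
    intro s
    have e : lam = fun u => Real.log (α u ^ 2 / σ u ^ 2) := funext hlam
    rw [hasDerivAt_deriv_iff, e]
    have h1 := hα.differentiable (by simp) s
    have h2 := hσ.differentiable (by simp) s
    have h3 := hαpos s
    have h4 := hσpos s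
    exact ((h1.pow 2).div (h2.pow 2) (pow_pos h4 2).ne').log
      (div_pos (pow_pos h3 2) (pow_pos h4 2)).ne'
  have hexp : ∀ s, Real.exp (-(lam s)) = σ s ^ 2 / α s ^ 2 := by
    intro s
    have h3 := hαpos s
    have h4 := hσpos s
    rw [hlam, ← Real.log_inv, Real.exp_log (by positivity), inv_div]
  set G : ℝ → EuclideanSpace ℝ (Fin D) :=
    fun s => gradient (fun z => Real.log (p s z)) (y s) with hG
  have hGd : ∀ s ∈ Set.Icc (0 : ℝ) t, HasDerivAt G (-(f s) • G s) s := fun s hs =>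
    aux_score f gsq p hp hppos hFP hgauss y s (hy s hs)
  have htt : t ∈ Set.Icc (0 : ℝ) t := ⟨ht.le, le_rfl⟩
  have hc0 : ∀ s ∈ Set.Icc (0 : ℝ) t, α s • G s = α 0 • G 0 := by
    refine aux_const (fun s => α s • G s) t fun s hs => ?_
    have := (hαd s).smul (hGd s hs)
    have e : α s • (-(f s) • G s) + (f s * α s) • G s = 0 := by module
    rw [e] at this
    exact this
  have hc : ∀ s ∈ Set.Icc (0 : ℝ) t, α s • G s = α t • G t := fun s hs => by
    rw [hc0 s hs, hc0 t htt]
  have hcon := aux_const (fun s => (α s)⁻¹ • y s + Real.exp (-(lam s)) • (α t • G t)) t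
    (fun s hs => by
      have h := (((hαd s).inv (hαpos s).ne').smul (hy s hs)).add
        ((hlamd s).neg.exp.smul_const (α t • G t))
      have e : (α s)⁻¹ • (f s • y s - gsq s • G s) + (-(f s * α s) / α s ^ 2) • y s +
          (Real.exp (-(lam s)) * -deriv lam s) • α t • G t = 0 := by
        rw [← hc s hs, hexp, hgsq]
        have := (hαpos s).ne'
        match_scalars <;> field_simp <;> ring
      rw [← e]
      exact h) t htt
  have e2 : y 0 = (α t)⁻¹ • y t
        + ((Real.exp (-(lam t)) - Real.exp (-(lam 0))) * α t) • G t := by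
    simp only [hα0, inv_one, one_smul] at hcon
    rw [← sub_eq_iff_eq_add] at hcon
    rw [← hcon]
    module
  refine ⟨?_, e2⟩
  change y 0 = (α t)⁻¹ • (y t + σ t ^ 2 • G t) - (Real.exp (-(lam 0)) * α t) • G t
  rw [e2, hexp t]
  have := (hαpos t).ne'
  match_scalars <;> field_simp
end
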